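/- Let p > 1, a, b > 0 and λ > 0. Let φ ∈ C¹[0,1] satisfy φ(0) = φ(1) = 0, φ > 0 on (0,1), φ(t) = φ(1−t) for all t, and suppose φ is a weak solution of −(|φ'|^{p−2} φ')' = λ |φ|^{p−2} φ on (0,1). Set t₀ = a/(a+b) and define u : [0,1] → ℝ by u(t) = φ(t/(2t₀)) for t ∈ [0, t₀] and u(t) = φ((t + 1 − 2t₀)/(2(1 − t₀))) for t ∈ [t₀, 1]. Then u ∈ C¹[0,1], u(0) = u(1) = 0, u > 0 on (0,1), and u is a weak solution of −Δ^{a,b}_p u = ((a+b)/2)^p λ |u|^{p−2} u on (0,1). -/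

import Mathlib

open Set

/-- `u` is C¹ on `[α, γ]` with derivative `u'` there. -/
def C1On (α γ : ℝ) (u u' : ℝ → ℝ) : Prop :=
  (∀ t ∈ Set.Icc α γ, HasDerivWithinAt u (u' t) (Set.Icc α γ) t) ∧
  ContinuousOn u' (Set.Icc α γ)

/-- Admissible functions on `[0, L]`: C¹ with zero boundary values. -/
def Adm (L : ℝ) (u u' : ℝ → ℝ) : Prop :=
  C1On 0 L u u' ∧ u 0 = 0 ∧ u L = 0

/-- The asymmetric energy integrand `a^p (s⁺)^p + b^p (s⁻)^p`. -/
noncomputable def asymE (p a b s : ℝ) : ℝ :=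
  a ^ p * (max s 0) ^ p + b ^ p * (max (-s) 0) ^ p

/-- The asymmetric flux `a^p (s⁺)^(p-1) - b^p (s⁻)^(p-1)`. -/
noncomputable def asymFlux (p a b s : ℝ) : ℝ :=
  a ^ p * (max s 0) ^ (p - 1) - b ^ p * (max (-s) 0) ^ (p - 1)

/-- The first Dirichlet eigenvalue `λ^{a,b}_{1,p}(0,L)`, as the infimum of the
asymmetric energy over normalized admissible functions. -/
noncomputable def lam1 (p a b L : ℝ) : ℝ :=
  sInf { E : ℝ | ∃ u u' : ℝ → ℝ, Adm L u u' ∧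
    (∫ t in (0:ℝ)..L, |u t| ^ p) = 1 ∧
    E = ∫ t in (0:ℝ)..L, asymE p a b (u' t) }

/-- `u` (a C¹ function on `[0,L]` with derivative `u'` and zero boundary values)
is a weak solution of `-Δ^{a,b}_p u = g` on `(0,L)`. -/
def IsWeakSol (p a b L : ℝ) (u u' g : ℝ → ℝ) : Prop :=
  Adm L u u' ∧
  ∀ φ φ' : ℝ → ℝ, Adm L φ φ' →
    (∫ t in (0:ℝ)..L, asymFlux p a b (u' t) * φ' t) =
      ∫ t in (0:ℝ)..L, g t * φ t

/-- The gluing of `φ : [0,1] → ℝ` at scale `t0`: the two monotone halves of `φ`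
are stretched to `[0,t0]` and `[t0,1]` respectively. -/
noncomputable def glue (φ : ℝ → ℝ) (t0 : ℝ) : ℝ → ℝ := fun t =>
  if t ≤ t0 then φ (t / (2 * t0)) else φ ((t + 1 - 2 * t0) / (2 * (1 - t0)))

/-!
By du Bois-Reymond's lemma, being a weak solution with continuous right-hand side `g` means that
the flux is `C¹` with derivative `-g`. If `g ≥ 0`, the flux of `φ` is therefore decreasing, and it
vanishes at the critical point `1/2`, so `φ' ≥ 0` on the left half and `φ' ≤ 0` on the right half.

Put `c = (a + b) / 2`. The gluing at `t₀ = a / (a + b)` multiplies the slope of `φ` by `c / a` on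
the left and by `c / b` on the right. On each side a single term of the asymmetric flux survives,
and homogeneity makes the new flux `a c ^ (p - 1)` resp. `b c ^ (p - 1)` times the rescaled flux of
`φ`. The two pieces match at `t₀` because the flux vanishes there, and differentiating once more
yields the same factor `c ^ p` on both sides.
-/

theorem eq_zero_of_hasDerivAt_of_symm {f : ℝ → ℝ} {d m : ℝ} (hf : HasDerivAt f d m)
    (hsym : ∀ t, f t = f (2 * m - t)) : d = 0 := by
  have hreflect : HasDerivAt (fun t => f (2 * m - t)) (-d) m :=
    HasDerivAt.comp_const_sub (2 * m) m (by rwa [two_mul, add_sub_cancel_right])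
  rw [← funext hsym] at hreflect
  linarith [hf.unique hreflect]

theorem C1On.continuousOn {α γ : ℝ} {f f' : ℝ → ℝ} (hf : C1On α γ f f') :
    ContinuousOn f (Icc α γ) :=
  fun t ht => (hf.1 t ht).continuousWithinAt

theorem C1On.congr {α γ : ℝ} {f f' u u' : ℝ → ℝ} (hf : C1On α γ f f')
    (hu : EqOn u f (Icc α γ)) (hu' : EqOn u' f' (Icc α γ)) : C1On α γ u u' := by
  refine ⟨fun t ht => ?_, hf.2.congr hu'⟩
  rw [hu' ht]
  exact (hf.1 t ht).congr hu (hu ht)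

theorem C1On.const_mul {α γ : ℝ} {f f' : ℝ → ℝ} (hf : C1On α γ f f') (k : ℝ) :
    C1On α γ (fun t => k * f t) (fun t => k * f' t) :=
  ⟨fun t ht => (hf.1 t ht).const_mul k, continuousOn_const.mul hf.2⟩

theorem C1On.const_sub {α γ : ℝ} {f f' : ℝ → ℝ} (hf : C1On α γ f f') (k : ℝ) :
    C1On α γ (fun t => k - f t) (fun t => -f' t) :=
  ⟨fun t ht => (hf.1 t ht).const_sub k, hf.2.neg⟩

theorem C1On.sub_const_mul {α γ : ℝ} {f f' : ℝ → ℝ} (hf : C1On α γ f f') (k : ℝ) :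
    C1On α γ (fun t => f t - k * t) (fun t => f' t - k) := by
  refine ⟨fun t ht => ?_, hf.2.sub continuousOn_const⟩
  have hlin : HasDerivWithinAt (fun t => k * t) k (Icc α γ) t :=
    (hasDerivAt_const_mul k).hasDerivWithinAt
  exact (hf.1 t ht).sub hlin

theorem C1On.comp_affine {α γ α' γ' m : ℝ} {f f' l : ℝ → ℝ} (hf : C1On α γ f f')
    (hl : ∀ t, HasDerivAt l m t) (hmaps : MapsTo l (Icc α' γ') (Icc α γ)) :
    C1On α' γ' (fun t => f (l t)) (fun t => m * f' (l t)) := by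
  have hlc : ContinuousOn l (Icc α' γ') := fun t _ => (hl t).continuousAt.continuousWithinAt
  refine ⟨fun t ht => ?_, continuousOn_const.mul (hf.2.comp hlc hmaps)⟩
  exact (hf.1 (l t) (hmaps ht)).scomp t (hl t).hasDerivWithinAt hmaps

theorem C1On.union {α τ γ : ℝ} {u u' : ℝ → ℝ} (hατ : α ≤ τ) (hτγ : τ ≤ γ)
    (hleft : C1On α τ u u') (hright : C1On τ γ u u') : C1On α γ u u' := by
  unfold C1On
  rw [← Icc_union_Icc_eq_Icc hατ hτγ]
  refine ⟨fun t _ => HasDerivWithinAt.union ?_ ?_,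
    hleft.2.union_of_isClosed hright.2 isClosed_Icc isClosed_Icc⟩
  · by_cases ht : t ∈ Icc α τ
    · exact hleft.1 t ht
    · exact HasFDerivWithinAt.of_notMem_closure (by rwa [closure_Icc])
  · by_cases ht : t ∈ Icc τ γ
    · exact hright.1 t ht
    · exact HasFDerivWithinAt.of_notMem_closure (by rwa [closure_Icc])

theorem eqOn_ite_le_left (τ : ℝ) (f₁ f₂ : ℝ → ℝ) :
    EqOn (fun t => if t ≤ τ then f₁ t else f₂ t) f₁ (Iic τ) :=
  fun _ ht => if_pos ht

theorem eqOn_ite_le_right {τ : ℝ} {f₁ f₂ : ℝ → ℝ} (h : f₁ τ = f₂ τ) :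
    EqOn (fun t => if t ≤ τ then f₁ t else f₂ t) f₂ (Ici τ) := by
  intro t ht
  rcases (mem_Ici.1 ht).eq_or_lt with rfl | hlt
  · exact (if_pos le_rfl).trans h
  · exact if_neg hlt.not_ge

theorem C1On.ite_le {α τ γ : ℝ} {f₁ f₁' f₂ f₂' : ℝ → ℝ} (hατ : α ≤ τ) (hτγ : τ ≤ γ)
    (h₁ : C1On α τ f₁ f₁') (h₂ : C1On τ γ f₂ f₂') (h : f₁ τ = f₂ τ) (h' : f₁' τ = f₂' τ) :
    C1On α γ (fun t => if t ≤ τ then f₁ t else f₂ t)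
      (fun t => if t ≤ τ then f₁' t else f₂' t) :=
  .union hατ hτγ
    (h₁.congr ((eqOn_ite_le_left τ f₁ f₂).mono Icc_subset_Iic_self)
      ((eqOn_ite_le_left τ f₁' f₂').mono Icc_subset_Iic_self))
    (h₂.congr ((eqOn_ite_le_right h).mono Icc_subset_Ici_self)
      ((eqOn_ite_le_right h').mono Icc_subset_Ici_self))

theorem exists_C1On_of_continuousOn {α γ : ℝ} (hαγ : α ≤ γ) {f : ℝ → ℝ}
    (hf : ContinuousOn f (Icc α γ)) : ∃ P : ℝ → ℝ, C1On α γ P f ∧ P α = 0 := by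
  have hext : Continuous (IccExtend hαγ ((Icc α γ).domRestrict f)) :=
    (continuousOn_iff_continuous_domRestrict.1 hf).Icc_extend'
  refine ⟨fun t => ∫ x in α..t, IccExtend hαγ ((Icc α γ).domRestrict f) x,
    ⟨fun t ht => ?_, hf⟩, intervalIntegral.integral_same⟩
  have hderiv := (hext.integral_hasStrictDerivAt α t).hasDerivAt.hasDerivWithinAt (s := Icc α γ)
  rwa [IccExtend_of_mem _ _ ht] at hderiv

theorem C1On.integral_deriv {α γ : ℝ} {f f' : ℝ → ℝ} (hf : C1On α γ f f') (hαγ : α ≤ γ) :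
    ∫ t in α..γ, f' t = f γ - f α :=
  intervalIntegral.integral_eq_sub_of_hasDerivAt_of_le hαγ hf.continuousOn
    (fun t ht => (hf.1 t (Ioo_subset_Icc_self ht)).hasDerivAt (Icc_mem_nhds ht.1 ht.2))
    (hf.2.intervalIntegrable_of_Icc hαγ)

theorem Adm.integral_mul_deriv {L : ℝ} {f f' w w' : ℝ → ℝ} (hw : Adm L w w') (hL : 0 ≤ L)
    (hf : C1On 0 L f f') : ∫ t in (0:ℝ)..L, f t * w' t = -∫ t in (0:ℝ)..L, f' t * w t := by
  obtain ⟨hwC, hw0, hwL⟩ := hw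
  rw [intervalIntegral.integral_mul_deriv_eq_deriv_mul_of_hasDerivWithinAt
    (by simpa only [uIcc_of_le hL] using hf.1) (by simpa only [uIcc_of_le hL] using hwC.1)
    (hf.2.intervalIntegrable_of_Icc hL) (hwC.2.intervalIntegrable_of_Icc hL), hw0, hwL]
  ring

theorem eqOn_zero_of_integral_sq_eq_zero {α γ : ℝ} (hαγ : α < γ) {f : ℝ → ℝ}
    (hf : ContinuousOn f (Icc α γ)) (hint : ∫ t in α..γ, f t ^ 2 = 0) :
    EqOn f 0 (Icc α γ) := by
  intro t ht
  by_contra hne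
  have hpos : 0 < ∫ t in α..γ, f t ^ 2 :=
    intervalIntegral.integral_pos hαγ (hf.pow 2) (fun _ _ => sq_nonneg _)
      ⟨t, ht, sq_pos_of_ne_zero hne⟩
  exact hpos.ne' hint

theorem exists_eqOn_const_of_integral_mul_deriv_eq_zero {L : ℝ} (hL : 0 < L) {K : ℝ → ℝ}
    (hK : ContinuousOn K (Icc 0 L))
    (h : ∀ w w' : ℝ → ℝ, Adm L w w' → ∫ t in (0:ℝ)..L, K t * w' t = 0) :
    ∃ m : ℝ, ∀ t ∈ Icc 0 L, K t = m := by
  obtain ⟨P, hP, hP0⟩ := exists_C1On_of_continuousOn hL.le hK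
  set m := P L / L with hm
  -- Du Bois-Reymond: test against the primitive of `K` minus its mean.
  have hw : Adm L (fun t => P t - m * t) (fun t => K t - m) :=
    ⟨hP.sub_const_mul m, by simp [hP0], by simp [hm, hL.ne']⟩
  have hmean : ∫ t in (0:ℝ)..L, (K t - m) = 0 :=
    (hw.1.integral_deriv hL.le).trans (sub_eq_zero.2 (hw.2.2.trans hw.2.1.symm))
  have hsq : ∫ t in (0:ℝ)..L, (K t - m) ^ 2 = 0 :=
    calc ∫ t in (0:ℝ)..L, (K t - m) ^ 2
        = ∫ t in (0:ℝ)..L, (K t * (K t - m) - m * (K t - m)) := by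
          congr 1; ext t; ring
      _ = (∫ t in (0:ℝ)..L, K t * (K t - m)) - ∫ t in (0:ℝ)..L, m * (K t - m) :=
          intervalIntegral.integral_sub ((hK.mul hw.1.2).intervalIntegrable_of_Icc hL.le)
            ((continuousOn_const.mul hw.1.2).intervalIntegrable_of_Icc hL.le)
      _ = 0 := by rw [h _ _ hw, intervalIntegral.integral_const_mul, hmean, mul_zero, sub_zero]
  exact ⟨m, fun t ht => sub_eq_zero.1 (eqOn_zero_of_integral_sq_eq_zero hL hw.1.2 hsq ht)⟩

section asymFlux

variable {p a b s : ℝ}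

theorem continuous_asymFlux (hp : 1 ≤ p) (a b : ℝ) : Continuous (asymFlux p a b) := by
  have hrpow {f : ℝ → ℝ} (hf : Continuous f) : Continuous fun s => max (f s) 0 ^ (p - 1) :=
    (hf.max continuous_const).rpow_const fun _ => Or.inr (sub_nonneg.2 hp)
  exact (continuous_const.mul (hrpow continuous_id)).sub
    (continuous_const.mul (hrpow continuous_neg))

theorem asymFlux_of_nonneg (hp : p ≠ 1) (hs : 0 ≤ s) :
    asymFlux p a b s = a ^ p * s ^ (p - 1) := by
  rw [asymFlux, max_eq_left hs, max_eq_right (neg_nonpos.2 hs),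
    Real.zero_rpow (sub_ne_zero.2 hp), mul_zero, sub_zero]

theorem asymFlux_neg (p a b s : ℝ) : asymFlux p a b (-s) = -asymFlux p b a s := by
  rw [asymFlux, asymFlux, neg_neg, neg_sub]

theorem asymFlux_of_nonpos (hp : p ≠ 1) (hs : s ≤ 0) :
    asymFlux p a b s = -(b ^ p * (-s) ^ (p - 1)) := by
  rw [← asymFlux_of_nonneg hp (neg_nonneg.2 hs), asymFlux_neg, neg_neg]

theorem asymFlux_zero (hp : p ≠ 1) : asymFlux p a b 0 = 0 := by
  rw [asymFlux_of_nonneg hp le_rfl, Real.zero_rpow (sub_ne_zero.2 hp), mul_zero]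

theorem asymFlux_one_one (hp : p ≠ 1) (s : ℝ) : asymFlux p 1 1 s = |s| ^ (p - 2) * s := by
  have hpow {x : ℝ} (hx : 0 ≤ x) : x ^ (p - 1) = x ^ (p - 2) * x := by
    rw [← Real.rpow_add_one' hx (by contrapose! hp; linarith)]
    ring_nf
  rcases le_total 0 s with hs | hs
  · rw [asymFlux_of_nonneg hp hs, Real.one_rpow, one_mul, abs_of_nonneg hs, hpow hs]
  · rw [asymFlux_of_nonpos hp hs, Real.one_rpow, one_mul, abs_of_nonpos hs,
      hpow (neg_nonneg.2 hs), mul_neg, neg_neg]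

theorem nonneg_of_asymFlux_nonneg (hp : p ≠ 1) (hb : 0 < b) (h : 0 ≤ asymFlux p a b s) :
    0 ≤ s := by
  by_contra! hs
  have : 0 < -s := neg_pos.2 hs
  have : 0 < b ^ p * (-s) ^ (p - 1) := by positivity
  rw [asymFlux_of_nonpos hp hs.le] at h
  linarith

theorem nonpos_of_asymFlux_nonpos (hp : p ≠ 1) (ha : 0 < a) (h : asymFlux p a b s ≤ 0) :
    s ≤ 0 := by
  rw [← neg_nonneg, ← asymFlux_neg] at h
  exact neg_nonneg.1 (nonneg_of_asymFlux_nonneg hp ha h)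

theorem asymFlux_div_mul_of_nonneg {c : ℝ} (hp : p ≠ 1) (ha : 0 < a) (hc : 0 ≤ c) (hs : 0 ≤ s) :
    asymFlux p a b (c / a * s) = a * c ^ (p - 1) * asymFlux p 1 1 s := by
  rw [asymFlux_of_nonneg hp (by positivity), asymFlux_of_nonneg hp hs, Real.one_rpow, one_mul,
    Real.mul_rpow (by positivity) hs, Real.div_rpow hc ha.le, Real.rpow_sub_one ha.ne' p]
  field_simp

theorem asymFlux_div_mul_of_nonpos {c : ℝ} (hp : p ≠ 1) (hb : 0 < b) (hc : 0 ≤ c) (hs : s ≤ 0) :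
    asymFlux p a b (c / b * s) = b * c ^ (p - 1) * asymFlux p 1 1 s := by
  have h := asymFlux_div_mul_of_nonneg (b := a) hp hb hc (neg_nonneg.2 hs)
  rwa [mul_neg, asymFlux_neg, asymFlux_neg, mul_neg, neg_inj] at h

end asymFlux

section IsWeakSol

variable {p a b L : ℝ} {u u' g : ℝ → ℝ}

theorem IsWeakSol.c1On_asymFlux (hu : IsWeakSol p a b L u u' g) (hp : 1 ≤ p) (hL : 0 < L)
    (hg : ContinuousOn g (Icc 0 L)) :
    C1On 0 L (fun t => asymFlux p a b (u' t)) (fun t => -g t) := by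
  obtain ⟨G, hG, -⟩ := exists_C1On_of_continuousOn hL.le hg
  have hflux : ContinuousOn (fun t => asymFlux p a b (u' t)) (Icc 0 L) :=
    (continuous_asymFlux hp a b).comp_continuousOn hu.1.1.2
  obtain ⟨m, hm⟩ : ∃ m, ∀ t ∈ Icc 0 L, asymFlux p a b (u' t) + G t = m := by
    refine exists_eqOn_const_of_integral_mul_deriv_eq_zero hL (hflux.add hG.continuousOn)
      fun w w' hw => ?_
    calc ∫ t in (0:ℝ)..L, (asymFlux p a b (u' t) + G t) * w' t
        = ∫ t in (0:ℝ)..L, (asymFlux p a b (u' t) * w' t + G t * w' t) := by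
          simp only [add_mul]
      _ = (∫ t in (0:ℝ)..L, asymFlux p a b (u' t) * w' t) + ∫ t in (0:ℝ)..L, G t * w' t :=
          intervalIntegral.integral_add ((hflux.mul hw.1.2).intervalIntegrable_of_Icc hL.le)
            ((hG.continuousOn.mul hw.1.2).intervalIntegrable_of_Icc hL.le)
      _ = 0 := by
          rw [hu.2 w w' hw, hw.integral_mul_deriv hL.le hG, add_neg_cancel]
  exact (hG.const_sub m).congr (fun t ht => eq_sub_of_add_eq (hm t ht)) (eqOn_refl _ _)

theorem Adm.isWeakSol (hu : Adm L u u') (hL : 0 ≤ L)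
    (hflux : C1On 0 L (fun t => asymFlux p a b (u' t)) (fun t => -g t)) :
    IsWeakSol p a b L u u' g := by
  refine ⟨hu, fun w w' hw => ?_⟩
  rw [hw.integral_mul_deriv hL hflux, ← intervalIntegral.integral_neg]
  simp only [neg_mul, neg_neg]

theorem IsWeakSol.antitoneOn_asymFlux (hu : IsWeakSol p a b L u u' g) (hp : 1 ≤ p) (hL : 0 < L)
    (hg : ContinuousOn g (Icc 0 L)) (hg0 : ∀ t ∈ Ioo 0 L, 0 ≤ g t) :
    AntitoneOn (fun t => asymFlux p a b (u' t)) (Icc 0 L) := by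
  have hflux := hu.c1On_asymFlux hp hL hg
  refine antitoneOn_of_hasDerivWithinAt_nonpos (convex_Icc 0 L) hflux.continuousOn
    (fun t ht => (hflux.1 t (interior_subset ht)).mono interior_subset) fun t ht => ?_
  rw [interior_Icc] at ht
  exact neg_nonpos.2 (hg0 t ht)

theorem IsWeakSol.deriv_nonneg_of_le {r t : ℝ} (hu : IsWeakSol p a b L u u' g) (hp : 1 < p)
    (hb : 0 < b) (hL : 0 < L) (hg : ContinuousOn g (Icc 0 L)) (hg0 : ∀ t ∈ Ioo 0 L, 0 ≤ g t)
    (hr : r ∈ Icc 0 L) (hcrit : u' r = 0) (ht : t ∈ Icc 0 L) (htr : t ≤ r) : 0 ≤ u' t := by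
  have h := hu.antitoneOn_asymFlux hp.le hL hg hg0 ht hr htr
  simp only [hcrit, asymFlux_zero hp.ne'] at h
  exact nonneg_of_asymFlux_nonneg hp.ne' hb h

theorem IsWeakSol.deriv_nonpos_of_ge {r t : ℝ} (hu : IsWeakSol p a b L u u' g) (hp : 1 < p)
    (ha : 0 < a) (hL : 0 < L) (hg : ContinuousOn g (Icc 0 L)) (hg0 : ∀ t ∈ Ioo 0 L, 0 ≤ g t)
    (hr : r ∈ Icc 0 L) (hcrit : u' r = 0) (ht : t ∈ Icc 0 L) (hrt : r ≤ t) : u' t ≤ 0 := by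
  have h := hu.antitoneOn_asymFlux hp.le hL hg hg0 hr ht hrt
  simp only [hcrit, asymFlux_zero hp.ne'] at h
  exact nonpos_of_asymFlux_nonpos hp.ne' ha h

end IsWeakSol

/-- The increasing affine map of `[0, t₀]` onto `[0, 1/2]`, through which `glue` reads off the left
half of a function. -/
noncomputable def leftParam (t₀ t : ℝ) : ℝ := t / (2 * t₀)

/-- The increasing affine map of `[t₀, 1]` onto `[1/2, 1]`, through which `glue` reads off the
right half of a function. -/
noncomputable def rightParam (t₀ t : ℝ) : ℝ := (t + 1 - 2 * t₀) / (2 * (1 - t₀))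

/-- The gluing `glue f t₀` with its left piece multiplied by `α` and its right piece by `β`. Both
the derivative and the flux of a gluing have this form. -/
noncomputable def weightedGlue (α β t₀ : ℝ) (f : ℝ → ℝ) : ℝ → ℝ := fun t =>
  if t ≤ t₀ then α * f (leftParam t₀ t) else β * f (rightParam t₀ t)

section glue

variable {t₀ : ℝ}

theorem hasDerivAt_leftParam (t₀ t : ℝ) : HasDerivAt (leftParam t₀) (1 / (2 * t₀)) t :=
  (hasDerivAt_id t).div_const _

theorem hasDerivAt_rightParam (t₀ t : ℝ) :
    HasDerivAt (rightParam t₀) (1 / (2 * (1 - t₀))) t :=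
  (((hasDerivAt_id t).add_const 1).sub_const _).div_const _

theorem leftParam_self (h₀ : t₀ ≠ 0) : leftParam t₀ t₀ = 1 / 2 := by
  unfold leftParam
  field_simp

theorem rightParam_self (h₁ : t₀ ≠ 1) : rightParam t₀ t₀ = 1 / 2 := by
  have : 1 - t₀ ≠ 0 := sub_ne_zero.2 h₁.symm
  unfold rightParam
  field_simp
  ring

theorem rightParam_one (h₁ : t₀ ≠ 1) : rightParam t₀ 1 = 1 := by
  rw [rightParam, div_eq_one_iff_eq (mul_ne_zero two_ne_zero (sub_ne_zero.2 h₁.symm))]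
  ring

theorem mapsTo_leftParam (h₀ : 0 < t₀) : MapsTo (leftParam t₀) (Icc 0 t₀) (Icc 0 (1 / 2)) := by
  rintro t ⟨ht0, ht1⟩
  refine ⟨div_nonneg ht0 (by positivity), ?_⟩
  rw [leftParam, div_le_iff₀ (by positivity)]
  linarith

theorem mapsTo_rightParam (h₁ : t₀ < 1) :
    MapsTo (rightParam t₀) (Icc t₀ 1) (Icc (1 / 2) 1) := by
  rintro t ⟨ht0, ht1⟩
  have hpos : 0 < 2 * (1 - t₀) := by linarith
  rw [rightParam, mem_Icc, le_div_iff₀ hpos, div_le_one hpos]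
  constructor <;> linarith

theorem glue_pos {φ : ℝ → ℝ} (h₀ : 0 < t₀) (h₁ : t₀ < 1) (hφ : ∀ t ∈ Ioo (0 : ℝ) 1, 0 < φ t) :
    ∀ t ∈ Ioo (0 : ℝ) 1, 0 < glue φ t₀ t := by
  rintro t ⟨ht0, ht1⟩
  unfold glue
  split_ifs with h
  · have hle := (mapsTo_leftParam h₀ ⟨ht0.le, h⟩).2
    exact hφ _ ⟨by positivity, hle.trans_lt one_half_lt_one⟩
  · have hge := (mapsTo_rightParam h₁ ⟨(not_le.1 h).le, ht1.le⟩).1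
    refine hφ _ ⟨one_half_pos.trans_le hge, ?_⟩
    rw [div_lt_one (by linarith)]
    linarith

theorem weightedGlue_self (α t₀ : ℝ) (f : ℝ → ℝ) :
    weightedGlue α α t₀ f = fun t => α * glue f t₀ t :=
  funext fun _ => (mul_ite _ _ _ _).symm

theorem c1On_weightedGlue {α β : ℝ} {f f' : ℝ → ℝ} (hf : C1On 0 1 f f') (h₀ : 0 < t₀)
    (h₁ : t₀ < 1) (h : α * f (1 / 2) = β * f (1 / 2))
    (h' : α / (2 * t₀) * f' (1 / 2) = β / (2 * (1 - t₀)) * f' (1 / 2)) :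
    C1On 0 1 (weightedGlue α β t₀ f)
      (weightedGlue (α / (2 * t₀)) (β / (2 * (1 - t₀))) t₀ f') := by
  have hleft := (hf.comp_affine (hasDerivAt_leftParam t₀) ((mapsTo_leftParam h₀).mono_right
    (Icc_subset_Icc_right one_half_lt_one.le))).const_mul α
  have hright := (hf.comp_affine (hasDerivAt_rightParam t₀) ((mapsTo_rightParam h₁).mono_right
    (Icc_subset_Icc_left one_half_pos.le))).const_mul β
  simp only [← mul_assoc, mul_one_div] at hleft hright
  refine .ite_le h₀.le h₁.le hleft hright ?_ ?_
  · rwa [leftParam_self h₀.ne', rightParam_self h₁.ne]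
  · rwa [leftParam_self h₀.ne', rightParam_self h₁.ne]

theorem adm_glue {φ φ' : ℝ → ℝ} (hφ : Adm 1 φ φ') (h₀ : 0 < t₀) (h₁ : t₀ < 1)
    (hcrit : φ' (1 / 2) = 0) :
    Adm 1 (glue φ t₀) (weightedGlue (1 / (2 * t₀)) (1 / (2 * (1 - t₀))) t₀ φ') := by
  obtain ⟨hC, hφ0, hφ1⟩ := hφ
  refine ⟨?_, ?_, ?_⟩
  · have h := c1On_weightedGlue (α := 1) (β := 1) hC h₀ h₁ rfl (by rw [hcrit, mul_zero, mul_zero])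
    simpa only [weightedGlue_self, one_mul] using h
  · simp only [glue, if_pos h₀.le, zero_div, hφ0]
  · rw [glue, if_neg h₁.not_ge]
    exact (congrArg φ (rightParam_one h₁.ne)).trans hφ1

theorem glue_comp (f φ : ℝ → ℝ) (t₀ t : ℝ) : glue (fun s => f (φ s)) t₀ t = f (glue φ t₀ t) :=
  (apply_ite f _ _ _).symm

theorem asymFlux_weightedGlue {p a b c : ℝ} {f : ℝ → ℝ} (hp : p ≠ 1) (ha : 0 < a) (hb : 0 < b)
    (hc : 0 ≤ c) (h₀ : 0 < t₀) (h₁ : t₀ < 1) (hleft : ∀ t ∈ Icc (0 : ℝ) (1 / 2), 0 ≤ f t)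
    (hright : ∀ t ∈ Icc (1 / 2 : ℝ) 1, f t ≤ 0) :
    EqOn (fun t => asymFlux p a b (weightedGlue (c / a) (c / b) t₀ f t))
      (weightedGlue (a * c ^ (p - 1)) (b * c ^ (p - 1)) t₀ fun s => asymFlux p 1 1 (f s))
      (Icc 0 1) := by
  rintro t ⟨ht0, ht1⟩
  simp only [weightedGlue]
  split_ifs with h
  · exact asymFlux_div_mul_of_nonneg hp ha hc (hleft _ (mapsTo_leftParam h₀ ⟨ht0, h⟩))
  · exact asymFlux_div_mul_of_nonpos hp hb hc
      (hright _ (mapsTo_rightParam h₁ ⟨(not_le.1 h).le, ht1⟩))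

end glue

section constants

variable {a b : ℝ}

theorem div_add_lt_one (hab : 0 < a + b) (hb : 0 < b) : a / (a + b) < 1 :=
  (div_lt_one hab).2 (lt_add_of_pos_right a hb)

theorem div_two_mul_div_add (a b x : ℝ) :
    x / (2 * (a / (a + b))) = x * ((a + b) / 2 / a) := by
  rw [mul_div_assoc', div_div_eq_mul_div]
  ring

theorem div_two_mul_one_sub_div_add (hab : a + b ≠ 0) (x : ℝ) :
    x / (2 * (1 - a / (a + b))) = x * ((a + b) / 2 / b) := by
  rw [one_sub_div hab, add_sub_cancel_left, mul_div_assoc', div_div_eq_mul_div]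
  ring

theorem mul_rpow_sub_one_mul_div {c d : ℝ} (hc : c ≠ 0) (hd : d ≠ 0) (p : ℝ) :
    d * c ^ (p - 1) * (c / d) = c ^ p := by
  rw [Real.rpow_sub_one hc]
  field_simp

end constants

theorem isWeakSol_glue {p a b : ℝ} {φ φ' g : ℝ → ℝ} (hp : 1 < p) (ha : 0 < a) (hb : 0 < b)
    (hφ : IsWeakSol p 1 1 1 φ φ' g) (hg : ContinuousOn g (Icc 0 1))
    (hg0 : ∀ t ∈ Ioo (0 : ℝ) 1, 0 ≤ g t) (hcrit : φ' (1 / 2) = 0) :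
    IsWeakSol p a b 1 (glue φ (a / (a + b)))
      (weightedGlue ((a + b) / 2 / a) ((a + b) / 2 / b) (a / (a + b)) φ')
      (fun t => ((a + b) / 2) ^ p * glue g (a / (a + b)) t) := by
  have hab : 0 < a + b := add_pos ha hb
  have hc : 0 < (a + b) / 2 := half_pos hab
  have h₀ : 0 < a / (a + b) := by positivity
  have h₁ := div_add_lt_one hab hb
  have hadm := adm_glue hφ.1 h₀ h₁ hcrit
  simp only [div_two_mul_div_add, div_two_mul_one_sub_div_add hab.ne', one_mul] at hadm
  have hhalf : (1 / 2 : ℝ) ∈ Icc (0 : ℝ) 1 := ⟨one_half_pos.le, one_half_lt_one.le⟩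
  have hleft : ∀ t ∈ Icc (0 : ℝ) (1 / 2), 0 ≤ φ' t := fun t ht =>
    hφ.deriv_nonneg_of_le hp one_pos one_pos hg hg0 hhalf hcrit ⟨ht.1, ht.2.trans hhalf.2⟩ ht.2
  have hright : ∀ t ∈ Icc (1 / 2 : ℝ) 1, φ' t ≤ 0 := fun t ht =>
    hφ.deriv_nonpos_of_ge hp one_pos one_pos hg hg0 hhalf hcrit ⟨hhalf.1.trans ht.1, ht.2⟩ ht.1
  have hflux : C1On 0 1
      (weightedGlue (a * ((a + b) / 2) ^ (p - 1)) (b * ((a + b) / 2) ^ (p - 1)) (a / (a + b))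
        fun t => asymFlux p 1 1 (φ' t))
      (fun t => ((a + b) / 2) ^ p * glue (fun s => -g s) (a / (a + b)) t) := by
    rw [← weightedGlue_self]
    convert c1On_weightedGlue (hφ.c1On_asymFlux hp.le one_pos hg) h₀ h₁ ?_ ?_ using 2 <;>
      simp only [div_two_mul_div_add, div_two_mul_one_sub_div_add hab.ne',
        mul_rpow_sub_one_mul_div hc.ne' ha.ne', mul_rpow_sub_one_mul_div hc.ne' hb.ne', hcrit,
        asymFlux_zero hp.ne', mul_zero]
  refine hadm.isWeakSol zero_le_one
    (hflux.congr (asymFlux_weightedGlue hp.ne' ha hb hc.le h₀ h₁ hleft hright) fun t _ => ?_)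
  simp only [glue_comp (fun s => -s), mul_neg]

theorem stmt6_general {p a b : ℝ} {φ φ' g : ℝ → ℝ} (hp : 1 < p) (ha : 0 < a) (hb : 0 < b)
    (hφ : IsWeakSol p 1 1 1 φ φ' g) (hpos : ∀ t ∈ Ioo (0 : ℝ) 1, 0 < φ t)
    (hg : ContinuousOn g (Icc 0 1)) (hg0 : ∀ t ∈ Ioo (0 : ℝ) 1, 0 ≤ g t)
    (hcrit : φ' (1 / 2) = 0) :
    ∃ u' : ℝ → ℝ,
      Adm 1 (glue φ (a / (a + b))) u' ∧
      (∀ t ∈ Ioo (0 : ℝ) 1, 0 < glue φ (a / (a + b)) t) ∧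
      IsWeakSol p a b 1 (glue φ (a / (a + b))) u'
        (fun t => ((a + b) / 2) ^ p * glue g (a / (a + b)) t) := by
  have hsol := isWeakSol_glue hp ha hb hφ hg hg0 hcrit
  exact ⟨_, hsol.1, glue_pos (by positivity) (div_add_lt_one (add_pos ha hb) hb) hpos, hsol⟩

theorem stmt6 (p a b lam : ℝ) (hp : 1 < p) (ha : 0 < a) (hb : 0 < b) (hlam : 0 < lam)
    (φ φ' : ℝ → ℝ) (hφ : Adm 1 φ φ')
    (hpos : ∀ t ∈ Set.Ioo (0:ℝ) 1, 0 < φ t)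
    (hsym : ∀ t, φ t = φ (1 - t))
    (hsol : IsWeakSol p 1 1 1 φ φ' (fun t => lam * |φ t| ^ (p - 2) * φ t)) :
    ∃ u' : ℝ → ℝ,
      Adm 1 (glue φ (a / (a + b))) u' ∧
      (∀ t ∈ Set.Ioo (0:ℝ) 1, 0 < glue φ (a / (a + b)) t) ∧
      IsWeakSol p a b 1 (glue φ (a / (a + b))) u'
        (fun t => ((a + b) / 2) ^ p * lam * |glue φ (a / (a + b)) t| ^ (p - 2)
          * glue φ (a / (a + b)) t) := by
  have hcrit : φ' (1 / 2) = 0 :=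
    eq_zero_of_hasDerivAt_of_symm
      ((hφ.1.1 _ (by norm_num)).hasDerivAt (Icc_mem_nhds one_half_pos one_half_lt_one))
      fun t => by rw [hsym, mul_one_div_cancel two_ne_zero]
  have hg : ContinuousOn (fun t => lam * |φ t| ^ (p - 2) * φ t) (Icc 0 1) := by
    simp only [mul_assoc, ← asymFlux_one_one hp.ne']
    exact continuousOn_const.mul
      ((continuous_asymFlux hp.le 1 1).comp_continuousOn hφ.1.continuousOn)
  have hg0 : ∀ t ∈ Ioo (0 : ℝ) 1, 0 ≤ lam * |φ t| ^ (p - 2) * φ t := fun t ht => by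
    have := hpos t ht
    positivity
  simpa only [glue_comp (fun s => lam * |s| ^ (p - 2) * s), ← mul_assoc]
    using stmt6_general hp ha hb hsol hpos hg hg0 hcrit
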